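/- Let F = ⋃_{j=1}^J φ_j(F) ⊂ ℝ^d be the self-similar attractor of an IFS Φ = {φ_j}_{j=1}^J (J ≥ 2) of similitudes with scaling ratios 0 < r_j < 1, and let D be the unique real root of ∑_{j=1}^J r_j^D = 1. Assume dim[F] = d, the Tileset Condition, the Nontriviality Condition, the Pearse–Winter Condition (∂C ⊂ F, C = [F]), D > d−1, and that T_0 = C ∖ ⋃_j φ_j(C) has a single connected component G which is diphase Steiner-like with inradius g and coefficients κ_0(G),…,κ_d(G). If Φ is of lattice type (i.e. the additive subgroup ∑_{j=1}^J (log r_j)ℤ of ℝ is discrete), then F is NOT Minkowski measurable, but the average Minkowski content M_av(F) := lim_{T→∞} (1/log T) ∫_{1/T}^1 ε^{D−d} V_F(ε) dε/ε exists and equals (∑_{m=0}^d (g^{D−m}/(D−m)) κ_m(G)) / (∑_{j=1}^J r_j^D log r_j^{−1}). -/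

import Mathlib

/-!
The tiling of `C` by the sets `φ j '' C` splits the part of the tube `F_ε` inside `C`: by the
Pearse–Winter Condition, the part inside `φ j '' C` is the image of the tube of radius `ε / r j`
inside `C`, and the remaining part is the inner `ε`-neighborhood of the generator. Hence
`f ε = ε ^ (D - d) * volume (F_ε ∩ C)` solves the renewal equation
`f ε = z ε + ∑ j, r j ^ D * f (ε / r j)`, whose source term `z` is explicit because the generator is
diphase. The part of the tube outside the convex body `C` has volume `O(ε)` and is negligible since
`d - 1 < D`.

The average content follows from an elementary renewal theorem: the tail integrals of `f ε / ε`
satisfy a renewal equation with bounded source, so that a comparison with `log` determines them up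
to `o(log)`.

In the lattice case `r j = q ^ n j`, summing dilates of `f` turns the renewal equation into
`S x - S (x / q) = z x`. If `f` had a limit `M ≠ 0` at `0`, then solving this equation from `0` up
to `g / q` and from `∞` down to `g` would produce two expressions for `S` on `(g, g / q)` that are
incompatible, because `d - D` is not an integer.
-/

open MeasureTheory Filter

/-- The inner `ε`-neighborhood of a set `G`:
`{x ∈ closure G | dist(x, Gᶜ) ≤ ε}`. -/
def innerNbhd {d : ℕ} (G : Set (EuclideanSpace ℝ (Fin d))) (ε : ℝ) :
    Set (EuclideanSpace ℝ (Fin d)) :=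
  {x ∈ closure G | Metric.infDist x Gᶜ ≤ ε}

section RenewalEquations

open Set Topology

variable {ι : Type*} [Fintype ι] {p r : ι → ℝ} {f z : ℝ → ℝ}

/-! ### Renewal equations -/

/-- The renewal equation on `(0, ∞)` in multiplicative form, with weights `p`, scaling ratios `r`
and source term `z`. -/
def RenewalEq (p r : ι → ℝ) (f z : ℝ → ℝ) : Prop :=
  ∀ s, 0 < s → f s = z s + ∑ j, p j * f (s / r j)

namespace RenewalEq

lemma rpow_mul (h : RenewalEq p r f z) (hr : ∀ j, 0 < r j) (t : ℝ) :
    RenewalEq (fun j => p j * r j ^ t) r (fun s => s ^ t * f s) (fun s => s ^ t * z s) := by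
  intro s hs
  have hterm : ∀ j, p j * r j ^ t * ((s / r j) ^ t * f (s / r j)) =
      s ^ t * (p j * f (s / r j)) := fun j => by
    rw [Real.div_rpow hs.le (hr j).le]
    field_simp [(Real.rpow_pos_of_pos (hr j) t).ne']
  simp only [hterm, ← Finset.mul_sum, ← mul_add, ← h s hs]

lemma add {f' z' : ℝ → ℝ} (h : RenewalEq p r f z) (h' : RenewalEq p r f' z') :
    RenewalEq p r (f + f') (z + z') := by
  intro s hs
  simp only [Pi.add_apply, mul_add, Finset.sum_add_distrib]
  linear_combination h s hs + h' s hs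

lemma const_mul (h : RenewalEq p r f z) (c : ℝ) :
    RenewalEq p r (fun s => c * f s) (fun s => c * z s) := by
  intro s hs
  simp only [mul_left_comm _ c, ← Finset.mul_sum, ← mul_add, ← h s hs]

end RenewalEq

lemma sum_mul_log_div (hp : ∑ j, p j = 1) (hr : ∀ j, 0 < r j) {s : ℝ} (hs : 0 < s) :
    ∑ j, p j * Real.log (s / r j) = Real.log s + ∑ j, p j * Real.log (r j)⁻¹ := by
  simp only [Real.log_div hs.ne' (hr _).ne', Real.log_inv, sub_eq_add_neg, mul_add,
    Finset.sum_add_distrib, ← Finset.sum_mul, hp, one_mul]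

lemma renewalEq_log (hp : ∑ j, p j = 1) (hr : ∀ j, 0 < r j) :
    RenewalEq p r Real.log (fun _ => -∑ j, p j * Real.log (r j)⁻¹) := by
  intro s hs
  rw [sum_mul_log_div hp hr hs, neg_add_cancel_comm_assoc]

lemma sum_mul_log_inv_pos (hp₀ : ∀ j, 0 ≤ p j) (hp : ∑ j, p j = 1) (hr : ∀ j, r j ∈ Ioo 0 1) :
    0 < ∑ j, p j * Real.log (r j)⁻¹ := by
  have hlog : ∀ j, 0 < Real.log (r j)⁻¹ := fun j =>
    Real.log_pos ((one_lt_inv₀ (hr j).1).2 (hr j).2)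
  obtain ⟨j, -, hj⟩ := Finset.exists_ne_zero_of_sum_ne_zero (hp.trans_ne one_ne_zero)
  exact Finset.sum_pos' (fun i _ => mul_nonneg (hp₀ i) (hlog i).le)
    ⟨j, Finset.mem_univ j, mul_pos ((hp₀ j).lt_of_ne' hj) (hlog j)⟩

namespace RenewalEq

/-- By `hs` the scales below `s₀` reach `[s₀, s₁]` under iterated division by the ratios without
overshooting `s₁`, so the bound propagates from `[s₀, s₁]` to all smaller scales. -/
lemma abs_le_of_supersolution (h : RenewalEq p r f z) (hp₀ : ∀ j, 0 ≤ p j)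
    (hr : ∀ j, r j ∈ Ioo 0 1) {B : ℝ → ℝ} {s₀ s₁ : ℝ} (hs : ∀ j, s₀ ≤ s₁ * r j)
    (hbase : ∀ s ∈ Icc s₀ s₁, |f s| ≤ B s)
    (hstep : ∀ s ∈ Ioo 0 s₀, |z s| + ∑ j, p j * B (s / r j) ≤ B s) :
    ∀ s ∈ Ioc 0 s₁, |f s| ≤ B s := by
  obtain ⟨ρ, hrρ, hρ₀, hρ₁⟩ : ∃ ρ, (∀ j, r j < ρ) ∧ 0 < ρ ∧ ρ < 1 :=
    ((eventually_all.2 fun j => nhdsWithin_le_nhds (eventually_gt_nhds (hr j).2)).and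
      (Ioo_mem_nhdsLT one_pos)).exists
  have hmain : ∀ N : ℕ, ∀ s ∈ Ioc 0 s₁, s₀ * ρ ^ N ≤ s → |f s| ≤ B s := by
    intro N
    induction N with
    | zero => exact fun s hs hN => hbase s ⟨by simpa using hN, hs.2⟩
    | succ N ih =>
      rintro s ⟨hs₀, hs₁⟩ hN
      rcases le_or_gt s₀ s with hle | hlt
      · exact hbase s ⟨hle, hs₁⟩
      have hdiv : ∀ j, |f (s / r j)| ≤ B (s / r j) := fun j => by
        have hrj := (hr j).1
        refine ih _ ⟨div_pos hs₀ hrj, (div_le_iff₀ hrj).2 (hlt.le.trans (hs j))⟩ ?_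
        calc s₀ * ρ ^ N ≤ s / ρ := (le_div_iff₀ hρ₀).2 (by rwa [mul_assoc, ← pow_succ])
          _ ≤ s / r j := div_le_div_of_nonneg_left hs₀.le hrj (hrρ j).le
      calc |f s| ≤ |z s| + ∑ j, p j * |f (s / r j)| := by
            rw [h s hs₀]
            refine (abs_add_le _ _).trans
              (add_le_add_right ((Finset.abs_sum_le_sum_abs _ _).trans_eq ?_) _)
            simp only [abs_mul, abs_of_nonneg (hp₀ _)]
        _ ≤ |z s| + ∑ j, p j * B (s / r j) := by gcongr with j; exacts [hp₀ j, hdiv j]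
        _ ≤ B s := hstep s ⟨hs₀, hlt⟩
  intro s hs
  have hlim : Tendsto (fun N : ℕ => s₀ * ρ ^ N) atTop (𝓝 0) := by
    simpa using (tendsto_pow_atTop_nhds_zero_of_lt_one hρ₀.le hρ₁).const_mul s₀
  obtain ⟨N, hN⟩ := (hlim.eventually_le_const hs.1).exists
  exact hmain N s hs hN

/-- The supersolution is `B₀ - c * log`: its excess in the renewal equation is `c` times the mean
`∑ j, p j * log (r j)⁻¹`, which beats the source term at small scales. -/
lemma exists_abs_le_sub_mul_log (h : RenewalEq p r f z) (hp₀ : ∀ j, 0 ≤ p j) (hp : ∑ j, p j = 1)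
    (hr : ∀ j, r j ∈ Ioo 0 1) (hf : ContinuousOn f (Ioi 0)) (hz : Tendsto z (𝓝[>] 0) (𝓝 0)) {c : ℝ}
    (hc : 0 < c) : ∃ B₀, ∀ᶠ s in 𝓝[>] 0, |f s| ≤ B₀ - c * Real.log s := by
  set m := ∑ j, p j * Real.log (r j)⁻¹
  have hm : 0 < m := sum_mul_log_inv_pos hp₀ hp hr
  obtain ⟨s₀, hs₀, hzs⟩ : ∃ s₀ > 0, ∀ s ∈ Ioo 0 s₀, |z s| < c * m := by
    have hsmall := hz.abs.eventually_lt_const (u := c * m) (by rw [abs_zero]; positivity)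
    exact mem_nhdsGT_iff_exists_Ioo_subset.1 hsmall
  set s₁ := ∑ j, s₀ / r j
  have hs : ∀ j, s₀ ≤ s₁ * r j := fun j => (div_le_iff₀ (hr j).1).1 <|
    Finset.single_le_sum (fun i _ => (div_pos hs₀ (hr i).1).le) (Finset.mem_univ j)
  have hs₁ : 0 < s₁ := by
    obtain ⟨j, -⟩ := Finset.nonempty_of_sum_ne_zero (hp.trans_ne one_ne_zero)
    exact pos_of_mul_pos_left (hs₀.trans_le (hs j)) (hr j).1.le
  obtain ⟨A, hA⟩ := isCompact_Icc.exists_bound_of_continuousOn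
    (hf.mono fun s (hs : s ∈ Icc s₀ s₁) => hs₀.trans_le hs.1)
  obtain ⟨B₀, hB₀⟩ : ∃ B₀, B₀ = A + c * Real.log s₁ := ⟨_, rfl⟩
  refine ⟨B₀, eventually_of_mem (Ioc_mem_nhdsGT hs₁) <|
    h.abs_le_of_supersolution hp₀ hr hs (fun s hs => ?_) fun s hs => ?_⟩
  · have hlog := Real.log_le_log (hs₀.trans_le hs.1) hs.2
    have hfs := hA s hs
    rw [Real.norm_eq_abs] at hfs
    nlinarith
  · simp only [mul_sub, Finset.sum_sub_distrib, ← Finset.sum_mul, hp, one_mul,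
      mul_left_comm _ c, ← Finset.mul_sum, sum_mul_log_div hp (fun j => (hr j).1) hs.1]
    linarith [hzs s hs]

lemma isLittleO_log (h : RenewalEq p r f z) (hp₀ : ∀ j, 0 ≤ p j) (hp : ∑ j, p j = 1)
    (hr : ∀ j, r j ∈ Ioo 0 1) (hf : ContinuousOn f (Ioi 0)) (hz : Tendsto z (𝓝[>] 0) (𝓝 0)) :
    f =o[𝓝[>] 0] Real.log := by
  refine Asymptotics.isLittleO_iff.2 fun c hc => ?_
  obtain ⟨B₀, hB₀⟩ := h.exists_abs_le_sub_mul_log hp₀ hp hr hf hz (half_pos hc)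
  filter_upwards [hB₀,
    Real.tendsto_log_nhdsGT_zero.eventually_le_atBot (-(2 * |B₀| / c))] with s hs hlog
  have hneg : Real.log s ≤ 0 := hlog.trans (neg_nonpos.2 (by positivity))
  have hB : |B₀| ≤ c / 2 * -Real.log s := by
    rw [le_neg, div_le_iff₀ hc] at hlog
    linarith
  rw [Real.norm_eq_abs, Real.norm_eq_abs, abs_of_nonpos hneg]
  linarith [le_abs_self B₀]

end RenewalEq

/-! ### Logarithmic averages -/

lemma comp_div_div_eq (f : ℝ → ℝ) {c : ℝ} (hc : c ≠ 0) (ε : ℝ) :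
    f (ε / c) / ε = c⁻¹ * (f (c⁻¹ * ε) / (c⁻¹ * ε)) := by
  simp only [inv_mul_eq_div, div_div, div_mul_cancel₀ _ hc]

lemma integrableOn_Ioi_comp_div_div {c s : ℝ} (hc : 0 < c)
    (hf : IntegrableOn (fun ε => f ε / ε) (Ioi (s / c))) :
    IntegrableOn (fun ε => f (ε / c) / ε) (Ioi s) := by
  simp only [comp_div_div_eq f hc.ne']
  refine ((integrableOn_Ioi_comp_mul_left_iff (fun ε => f ε / ε) s (inv_pos.2 hc)).2 ?_).const_mul _
  rwa [inv_mul_eq_div]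

lemma integral_Ioi_comp_div_div (f : ℝ → ℝ) {c : ℝ} (hc : 0 < c) (s : ℝ) :
    ∫ ε in Ioi s, f (ε / c) / ε = ∫ ε in Ioi (s / c), f ε / ε := by
  simp only [comp_div_div_eq f hc.ne', integral_const_mul]
  rw [integral_comp_mul_left_Ioi (fun ε => f ε / ε) s (inv_pos.2 hc), smul_eq_mul, inv_inv,
    inv_mul_cancel_left₀ hc.ne', inv_mul_eq_div]

lemma RenewalEq.integral_Ioi (h : RenewalEq p r f z) (hr : ∀ j, 0 < r j)
    (hf : ∀ s, 0 < s → IntegrableOn (fun ε => f ε / ε) (Ioi s))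
    (hz : ∀ s, 0 < s → IntegrableOn (fun ε => z ε / ε) (Ioi s)) :
    RenewalEq p r (fun s => ∫ ε in Ioi s, f ε / ε) (fun s => ∫ ε in Ioi s, z ε / ε) := by
  intro s hs
  have hterm : ∀ j, IntegrableOn (fun ε => p j * (f (ε / r j) / ε)) (Ioi s) := fun j =>
    (integrableOn_Ioi_comp_div_div (hr j) (hf _ (div_pos hs (hr j)))).const_mul _
  calc ∫ ε in Ioi s, f ε / ε
      = ∫ ε in Ioi s, z ε / ε + ∑ j, p j * (f (ε / r j) / ε) := by
        refine setIntegral_congr_fun measurableSet_Ioi fun ε hε => ?_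
        simp only [h ε (hs.trans hε), add_div, Finset.sum_div, mul_div_assoc]
    _ = (∫ ε in Ioi s, z ε / ε) + ∑ j, p j * ∫ ε in Ioi (s / r j), f ε / ε := by
        rw [integral_add (hz s hs) (integrable_finsetSum _ fun j _ => hterm j),
          integral_finsetSum _ fun j _ => hterm j]
        simp only [integral_const_mul, integral_Ioi_comp_div_div f (hr _)]

lemma continuousOn_integral_Ioi (hf : ∀ s, 0 < s → IntegrableOn f (Ioi s)) :
    ContinuousOn (fun s => ∫ ε in Ioi s, f ε) (Ioi 0) := fun s (hs : 0 < s) =>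
  ((hf _ (half_pos hs)).continuousOn_Ici_primitive_Ioi.continuousAt
    (Ici_mem_nhds (half_lt_self hs))).continuousWithinAt

/-- The elementary renewal theorem. With `m = ∑ j, p j * log (r j)⁻¹` and `Z₀ = ∫₀^∞ z ε / ε`, the
tail integral of `f` differs from `-(Z₀ / m) log s` by a solution of the renewal equation whose
source tends to `0`, hence by `o(log s)`. -/
lemma RenewalEq.tendsto_integral_Ioi_div_log (h : RenewalEq p r f z) (hp₀ : ∀ j, 0 ≤ p j)
    (hp : ∑ j, p j = 1) (hr : ∀ j, r j ∈ Ioo 0 1)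
    (hf : ∀ s, 0 < s → IntegrableOn (fun ε => f ε / ε) (Ioi s))
    (hz : IntegrableOn (fun ε => z ε / ε) (Ioi 0)) :
    Tendsto (fun s => (∫ ε in Ioi s, f ε / ε) / Real.log s) (𝓝[>] 0)
      (𝓝 (-((∫ ε in Ioi 0, z ε / ε) / ∑ j, p j * Real.log (r j)⁻¹))) := by
  set Z₀ := ∫ ε in Ioi 0, z ε / ε
  set m := ∑ j, p j * Real.log (r j)⁻¹
  have hm : m ≠ 0 := (sum_mul_log_inv_pos hp₀ hp hr).ne'
  have hsource : Tendsto (fun s => (∫ ε in Ioi s, z ε / ε) + Z₀ / m * -m) (𝓝[>] 0) (𝓝 0) := by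
    have hZ : Tendsto (fun s => ∫ ε in Ioi s, z ε / ε) (𝓝[>] 0) (𝓝 Z₀) :=
      hz.continuousWithinAt_Ici_primitive_Ioi.mono Ioi_subset_Ici_self
    convert hZ.add_const (Z₀ / m * -m) using 2
    field_simp
    ring
  have hlittle := ((h.integral_Ioi (fun j => (hr j).1) hf
      fun s hs => hz.mono_set (Ioi_subset_Ioi hs.le)).add
    ((renewalEq_log hp fun j => (hr j).1).const_mul (Z₀ / m))).isLittleO_log hp₀ hp hr
    ((continuousOn_integral_Ioi hf).add
      (continuousOn_const.mul (Real.continuousOn_log.mono fun s (hs : 0 < s) => hs.ne')))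
    hsource
  have hlim := hlittle.tendsto_div_nhds_zero.sub_const (Z₀ / m)
  rw [zero_sub] at hlim
  refine hlim.congr' ?_
  filter_upwards [Ioo_mem_nhdsGT one_pos] with s hs
  rw [Pi.add_apply, add_div, mul_div_cancel_right₀ _ (Real.log_neg hs.1 hs.2).ne,
    add_sub_cancel_right]

/-- The logarithmic average of `f` over the scales in `(1 / T, 1]`; the average Minkowski content is
its limit for `f ε = ε ^ (D - d) * V_F ε`. -/
noncomputable def logAverage (f : ℝ → ℝ) (T : ℝ) : ℝ :=
  1 / Real.log T * ∫ ε in Ioc (1 / T) 1, f ε / ε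

lemma RenewalEq.tendsto_logAverage (h : RenewalEq p r f z) (hp₀ : ∀ j, 0 ≤ p j)
    (hp : ∑ j, p j = 1) (hr : ∀ j, r j ∈ Ioo 0 1)
    (hf : ∀ s, 0 < s → IntegrableOn (fun ε => f ε / ε) (Ioi s))
    (hz : IntegrableOn (fun ε => z ε / ε) (Ioi 0)) :
    Tendsto (logAverage f) atTop
      (𝓝 ((∫ ε in Ioi 0, z ε / ε) / ∑ j, p j * Real.log (r j)⁻¹)) := by
  have hlog : Tendsto (fun T : ℝ => (Real.log T)⁻¹) atTop (𝓝 0) :=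
    Real.tendsto_log_atTop.inv_tendsto_atTop
  have hlim := (((h.tendsto_integral_Ioi_div_log hp₀ hp hr hf hz).comp
    tendsto_inv_atTop_nhdsGT_zero).neg).sub (hlog.mul_const (∫ ε in Ioi 1, f ε / ε))
  rw [neg_neg, zero_mul, sub_zero] at hlim
  refine hlim.congr' ?_
  filter_upwards [eventually_gt_atTop 1] with T hT
  have hT₁ : T⁻¹ ≤ 1 := inv_le_one_of_one_le₀ hT.le
  have hsplit := intervalIntegral.integral_Ioi_sub_Ioi (hf T⁻¹ (by positivity)) hT₁
  rw [logAverage, one_div, one_div, ← intervalIntegral.integral_of_le hT₁, ← hsplit,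
    Function.comp_apply, Real.log_inv]
  ring

lemma tendsto_logAverage_zero (hf : IntegrableOn (fun ε => f ε / ε) (Ioc 0 1)) :
    Tendsto (logAverage f) atTop (𝓝 0) := by
  have hlog : Tendsto (fun T : ℝ => 1 / Real.log T) atTop (𝓝 0) :=
    Real.tendsto_log_atTop.const_div_atTop 1
  refine hlog.zero_mul_isBoundedUnder_le (isBoundedUnder_of_eventually_le
    (a := ∫ ε in Ioc 0 1, ‖f ε / ε‖) ?_)
  filter_upwards [eventually_gt_atTop 0] with T hT
  have hsub : Ioc (1 / T) 1 ⊆ Ioc 0 1 := Ioc_subset_Ioc_left (by positivity)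
  exact (norm_integral_le_integral_norm _).trans
    (setIntegral_mono_set hf.norm (ae_of_all _ fun _ => norm_nonneg _) hsub.eventuallyLE)

lemma logAverage_add {f' : ℝ → ℝ} {T : ℝ} (hf : IntegrableOn (fun ε => f ε / ε) (Ioc (1 / T) 1))
    (hf' : IntegrableOn (fun ε => f' ε / ε) (Ioc (1 / T) 1)) :
    logAverage (f + f') T = logAverage f T + logAverage f' T := by
  simp only [logAverage, Pi.add_apply, add_div, ← mul_add]
  rw [integral_add hf hf']

/-! ### Diphase functions -/

/-- The rescaled tube formula of a diphase Steiner-like set of dimension `d` with inradius `g`: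
`z ε = ε ^ (D - d) * V ε`, where `V ε = ∑ m < d, κ m * ε ^ (d - m)` for `ε < g` and `V ε = -κ d` for
`g ≤ ε`. -/
structure IsDiphase (d : ℕ) (D g : ℝ) (κ : ℕ → ℝ) (z : ℝ → ℝ) : Prop where
  of_lt : ∀ ε, 0 < ε → ε < g → z ε = ∑ m ∈ Finset.range d, κ m * ε ^ (D - m)
  of_ge : ∀ ε, g ≤ ε → z ε = -κ d * ε ^ (D - d)

variable {d : ℕ} {D g : ℝ} {κ : ℕ → ℝ}

lemma isDiphase_rpow_mul {V : ℝ → ℝ}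
    (hlt : ∀ ε, 0 < ε → ε < g → V ε = ∑ m ∈ Finset.range d, κ m * ε ^ ((d : ℝ) - m))
    (hge : ∀ ε, g ≤ ε → V ε = -κ d) :
    IsDiphase d D g κ (fun ε => ε ^ (D - d) * V ε) where
  of_lt ε hε hεg := by
    simp only [hlt ε hε hεg, Finset.mul_sum, mul_left_comm (ε ^ (D - d)), ← Real.rpow_add hε,
      sub_add_sub_cancel]
  of_ge ε hε := by rw [hge ε hε, mul_comm]

lemma integrableOn_Ioc_rpow_sub_one {a : ℝ} (ha : 0 < a) {c : ℝ} (hc : 0 ≤ c) :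
    IntegrableOn (fun ε : ℝ => ε ^ (a - 1)) (Ioc 0 c) :=
  (intervalIntegrable_iff_integrableOn_Ioc_of_le hc).1
    (intervalIntegral.intervalIntegrable_rpow' (by linarith))

lemma integral_Ioc_rpow_sub_one {a : ℝ} (ha : 0 < a) {c : ℝ} (hc : 0 ≤ c) :
    ∫ ε in Ioc 0 c, ε ^ (a - 1) = c ^ a / a := by
  have ha' : -1 < a - 1 := by linarith
  rw [← intervalIntegral.integral_of_le hc, integral_rpow (Or.inl ha'), sub_add_cancel,
    Real.zero_rpow ha.ne', sub_zero]

namespace IsDiphase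

lemma integrableOn_and_integral_Ioc (hz : IsDiphase d D g κ z) (hg : 0 < g) (hD : (d : ℝ) - 1 < D) :
    IntegrableOn (fun ε => z ε / ε) (Ioc 0 g) ∧
      ∫ ε in Ioc 0 g, z ε / ε = ∑ m ∈ Finset.range d, g ^ (D - m) / (D - m) * κ m := by
  have hpos : ∀ m ∈ Finset.range d, 0 < D - m := fun m hm => by
    have : (m : ℝ) + 1 ≤ d := by exact_mod_cast Finset.mem_range.1 hm
    linarith
  have hterm : ∀ m ∈ Finset.range d,
      IntegrableOn (fun ε : ℝ => κ m * ε ^ (D - m - 1)) (Ioo 0 g) := fun m hm =>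
    ((integrableOn_Ioc_rpow_sub_one (hpos m hm) hg.le).mono_set Ioo_subset_Ioc_self).const_mul _
  have heq : EqOn (fun ε => ∑ m ∈ Finset.range d, κ m * ε ^ (D - m - 1)) (fun ε => z ε / ε)
      (Ioo 0 g) := fun ε hε => by
    simp only [hz.of_lt ε hε.1 hε.2, Finset.sum_div, mul_div_assoc, Real.rpow_sub_one hε.1.ne']
  refine ⟨(integrableOn_Ioc_iff_integrableOn_Ioo).2
    (IntegrableOn.congr_fun (integrable_finsetSum _ hterm) heq measurableSet_Ioo), ?_⟩
  rw [integral_Ioc_eq_integral_Ioo, ← setIntegral_congr_fun measurableSet_Ioo heq,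
    integral_finsetSum _ hterm]
  refine Finset.sum_congr rfl fun m hm => ?_
  rw [integral_const_mul, ← integral_Ioc_eq_integral_Ioo,
    integral_Ioc_rpow_sub_one (hpos m hm) hg.le, mul_comm]

lemma integrableOn_and_integral_Ioi (hz : IsDiphase d D g κ z) (hg : 0 < g) (hD : D < d) :
    IntegrableOn (fun ε => z ε / ε) (Ioi g) ∧
      ∫ ε in Ioi g, z ε / ε = g ^ (D - d) / (D - d) * κ d := by
  have hD' : D - d - 1 < -1 := by linarith
  have heq : EqOn (fun ε => -κ d * ε ^ (D - d - 1)) (fun ε => z ε / ε) (Ioi g) := fun ε hε => by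
    simp only [hz.of_ge ε (le_of_lt hε), mul_div_assoc, Real.rpow_sub_one (hg.trans hε).ne']
  refine ⟨IntegrableOn.congr_fun ((integrableOn_Ioi_rpow_of_lt hD' hg).const_mul _) heq
    measurableSet_Ioi, ?_⟩
  rw [← setIntegral_congr_fun measurableSet_Ioi heq, integral_const_mul,
    integral_Ioi_rpow_of_lt hD' hg, sub_add_cancel]
  ring

lemma integrableOn_Ioi (hz : IsDiphase d D g κ z) (hg : 0 < g) (hD₁ : (d : ℝ) - 1 < D)
    (hD₂ : D < d) : IntegrableOn (fun ε => z ε / ε) (Ioi 0) := by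
  rw [← Ioc_union_Ioi_eq_Ioi hg.le]
  exact (hz.integrableOn_and_integral_Ioc hg hD₁).1.union
    (hz.integrableOn_and_integral_Ioi hg hD₂).1

lemma integral_Ioi (hz : IsDiphase d D g κ z) (hg : 0 < g) (hD₁ : (d : ℝ) - 1 < D) (hD₂ : D < d) :
    ∫ ε in Ioi 0, z ε / ε = ∑ m ∈ Finset.range (d + 1), g ^ (D - m) / (D - m) * κ m := by
  obtain ⟨hint₁, heq₁⟩ := hz.integrableOn_and_integral_Ioc hg hD₁
  obtain ⟨hint₂, heq₂⟩ := hz.integrableOn_and_integral_Ioi hg hD₂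
  rw [← Ioc_union_Ioi_eq_Ioi hg.le,
    setIntegral_union Ioc_disjoint_Ioi_same measurableSet_Ioi hint₁ hint₂, heq₁, heq₂,
    Finset.sum_range_succ]

end IsDiphase

/-! ### Lattice renewal equations -/

/-- For ratios `r j = q ^ n j` that are powers of a single base `q`, the combination of dilates of
`f` that turns the renewal equation for `f` into a first-order difference equation
(`RenewalEq.latticeSum_sub`). -/
noncomputable def latticeSum (p : ι → ℝ) (n : ι → ℕ) (q : ℝ) (f : ℝ → ℝ) (x : ℝ) : ℝ :=
  ∑ j, p j * ∑ i ∈ Finset.range (n j), f (x / q ^ i)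

variable {n : ι → ℕ} {q : ℝ}

lemma RenewalEq.latticeSum_sub (h : RenewalEq p (fun j => q ^ n j) f z) (hp : ∑ j, p j = 1) {x : ℝ}
    (hx : 0 < x) : latticeSum p n q f x - latticeSum p n q f (x / q) = z x := by
  have htelescope : ∀ j, (∑ i ∈ Finset.range (n j), f (x / q ^ i)) -
      ∑ i ∈ Finset.range (n j), f (x / q / q ^ i) = f x - f (x / q ^ n j) := fun j => by
    simpa only [div_div, ← pow_succ', pow_zero, div_one, Finset.sum_sub_distrib] using
      Finset.sum_range_sub' (fun i => f (x / q ^ i)) (n j)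
  simp only [latticeSum, ← Finset.sum_sub_distrib, ← mul_sub, htelescope]
  simp only [mul_sub, Finset.sum_sub_distrib, ← Finset.sum_mul, hp, one_mul]
  rw [h x hx, add_sub_cancel_right]

lemma tendsto_latticeSum {l : Filter ℝ} {M : ℝ} (hf : Tendsto f l (𝓝 M))
    (hl : Tendsto (· / q) l l) :
    Tendsto (latticeSum p n q f) l (𝓝 ((∑ j, p j * n j) * M)) := by
  have hpow : ∀ i : ℕ, Tendsto (· / q ^ i) l l := fun i => by
    induction i with
    | zero => simpa only [pow_zero, div_one] using! tendsto_id (x := l)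
    | succ i ih => simpa only [pow_succ, ← div_div, Function.comp_def] using hl.comp ih
  have hsum := tendsto_finsetSum Finset.univ fun j _ =>
    (tendsto_finsetSum (Finset.range (n j)) fun i _ => hf.comp (hpow i)).const_mul (p j)
  simp only [Finset.sum_const, Finset.card_range, nsmul_eq_mul, ← mul_assoc, ← Finset.sum_mul]
    at hsum
  exact hsum

/-- The power-function solution `E` of the difference equation `E x - E (x / q) = x ^ w`. -/
noncomputable def rpowPrimitive (q w x : ℝ) : ℝ := x ^ w / (1 - q ^ (-w))

lemma rpow_neg_ne_one (hq : q ∈ Ioo 0 1) {w : ℝ} (hw : w ≠ 0) : 1 - q ^ (-w) ≠ 0 := by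
  rw [sub_ne_zero, ← Real.rpow_zero q]
  exact fun h => hw (neg_eq_zero.1 ((Real.rpow_right_inj hq.1 hq.2.ne).1 h).symm)

lemma rpowPrimitive_sub (hq : q ∈ Ioo 0 1) {w : ℝ} (hw : w ≠ 0) {x : ℝ} (hx : 0 ≤ x) :
    rpowPrimitive q w x - rpowPrimitive q w (x / q) = x ^ w := by
  rw [rpowPrimitive, rpowPrimitive, Real.div_rpow hx hq.1.le, div_eq_mul_inv (x ^ w) (q ^ w),
    ← Real.rpow_neg hq.1.le, ← sub_div, ← mul_one_sub,
    mul_div_cancel_right₀ _ (rpow_neg_ne_one hq hw)]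

lemma tendsto_rpowPrimitive_nhdsGT_zero {w : ℝ} (hw : 0 < w) :
    Tendsto (rpowPrimitive q w) (𝓝[>] 0) (𝓝 0) := by
  have hlim := (Real.continuousAt_rpow_const 0 w (Or.inr hw.le)).tendsto.div_const (1 - q ^ (-w))
  rw [Real.zero_rpow hw.ne', zero_div] at hlim
  exact hlim.mono_left nhdsWithin_le_nhds

lemma tendsto_rpowPrimitive_atTop {w : ℝ} (hw : w < 0) :
    Tendsto (rpowPrimitive q w) atTop (𝓝 0) := by
  have hlim := (tendsto_rpow_neg_atTop (neg_pos.2 hw)).div_const (1 - q ^ (-w))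
  rwa [neg_neg, zero_div] at hlim

lemma eq_of_tendsto_of_comp_eqOn {X Y : Type*} [TopologicalSpace Y] [T2Space Y] {T : X → X}
    {s : Set X} {u : X → Y} {l : Filter X} {L : Y} (hT : MapsTo T s s) (hu : EqOn (u ∘ T) u s)
    (hl : Tendsto u l (𝓝 L)) {x : X} (hx : x ∈ s) (hxl : Tendsto (fun N => T^[N] x) atTop l) :
    u x = L := by
  have hiter : ∀ N, u (T^[N] x) = u x := fun N => by
    induction N with
    | zero => rfl
    | succ N ih =>
      rw [Function.iterate_succ_apply', ← ih, ← hu (hT.iterate N hx), Function.comp_apply]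
  exact tendsto_nhds_unique (tendsto_const_nhds.congr fun N => (hiter N).symm) (hl.comp hxl)

namespace IsDiphase

variable {S : ℝ → ℝ}

lemma eq_of_sub_eq_of_lt (hz : IsDiphase d D g κ z) (hD : (d : ℝ) - 1 < D) (hq : q ∈ Ioo 0 1)
    (hS : ∀ x, 0 < x → S x - S (x / q) = z x) {M : ℝ} (hM : Tendsto S (𝓝[>] 0) (𝓝 M)) {x : ℝ}
    (hx : x ∈ Ioo 0 (g / q)) :
    S x = M + ∑ m ∈ Finset.range d, κ m * rpowPrimitive q (D - m) x := by
  have hpos : ∀ m ∈ Finset.range d, 0 < D - m := fun m hm => by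
    have : (m : ℝ) + 1 ≤ d := by exact_mod_cast Finset.mem_range.1 hm
    linarith
  set u : ℝ → ℝ := fun x => S x - ∑ m ∈ Finset.range d, κ m * rpowPrimitive q (D - m) x
  suffices hu : u x = M by rw [← hu, sub_add_cancel]
  refine eq_of_tendsto_of_comp_eqOn (T := (q * ·)) (s := Ioo 0 (g / q)) (l := 𝓝[>] 0)
    (fun y hy => ?_) (fun y hy => ?_) ?_ hx ?_
  · exact ⟨mul_pos hq.1 hy.1, (mul_le_of_le_one_left hy.1.le hq.2.le).trans_lt hy.2⟩
  · have hqy : 0 < q * y := mul_pos hq.1 hy.1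
    have hpow : ∀ m ∈ Finset.range d, κ m * (rpowPrimitive q (D - m) (q * y) -
        rpowPrimitive q (D - m) (q * y / q)) = κ m * (q * y) ^ (D - m) := fun m hm => by
      rw [rpowPrimitive_sub hq (hpos m hm).ne' hqy.le]
    have hstep := hS _ hqy
    rw [hz.of_lt _ hqy ((lt_div_iff₀' hq.1).1 hy.2), ← Finset.sum_congr rfl hpow] at hstep
    simp only [mul_div_cancel_left₀ _ hq.1.ne', mul_sub, Finset.sum_sub_distrib] at hstep
    simp only [u, Function.comp_apply]
    linarith
  · have hlim := hM.sub (tendsto_finsetSum (Finset.range d) fun m hm =>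
      (tendsto_rpowPrimitive_nhdsGT_zero (q := q) (hpos m hm)).const_mul (κ m))
    simpa only [mul_zero, Finset.sum_const_zero, sub_zero] using hlim
  · simp only [mul_left_iterate]
    have hlim := (tendsto_pow_atTop_nhds_zero_of_lt_one hq.1.le hq.2).mul_const x
    rw [zero_mul] at hlim
    exact tendsto_nhdsWithin_iff.2
      ⟨hlim, Eventually.of_forall fun N => mul_pos (pow_pos hq.1 N) hx.1⟩

lemma eq_of_sub_eq_of_ge (hz : IsDiphase d D g κ z) (hg : 0 < g) (hD : D < d) (hq : q ∈ Ioo 0 1)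
    (hS : ∀ x, 0 < x → S x - S (x / q) = z x) (h₀ : Tendsto S atTop (𝓝 0)) {x : ℝ} (hx : g ≤ x) :
    S x = -κ d * rpowPrimitive q (D - d) x := by
  have hDd : D - d < 0 := sub_neg.2 hD
  set u : ℝ → ℝ := fun x => S x + κ d * rpowPrimitive q (D - d) x
  suffices hu : u x = 0 by rw [neg_mul]; exact eq_neg_of_add_eq_zero_left hu
  refine eq_of_tendsto_of_comp_eqOn (T := (· / q)) (s := Ici g) (l := atTop)
    (fun y hy => ?_) (fun y hy => ?_) ?_ hx ?_
  · exact le_trans hy (le_div_self (hg.le.trans hy) hq.1 hq.2.le)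
  · have hy₀ : 0 < y := hg.trans_le hy
    have hstep := hS y hy₀
    rw [hz.of_ge y hy, ← rpowPrimitive_sub hq hDd.ne hy₀.le] at hstep
    simp only [u, Function.comp_apply]
    linarith
  · simpa only [mul_zero, add_zero] using
      h₀.add ((tendsto_rpowPrimitive_atTop (q := q) hDd).const_mul (κ d))
  · simp only [div_eq_mul_inv, mul_right_iterate]
    exact (tendsto_pow_atTop_atTop_of_one_lt ((one_lt_inv₀ hq.1).2 hq.2)).const_mul_atTop
      (hg.trans_le hx)

end IsDiphase

lemma iterate_deriv_polynomial_eval (P : Polynomial ℝ) (k : ℕ) :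
    deriv^[k] (fun x => P.eval x) = fun x => (Polynomial.derivative^[k] P).eval x :=
  have hsemi : Function.Semiconj (fun (P : Polynomial ℝ) (x : ℝ) => P.eval x)
      (fun P => Polynomial.derivative P) deriv := fun _ => funext fun _ => (Polynomial.deriv _).symm
  (hsemi.iterate_right k P).symm

lemma exists_nat_eq_of_rpow_eq_polynomial {a : ℝ} {P : Polynomial ℝ} {U : Set ℝ} (hU : IsOpen U)
    (hU₀ : U ⊆ Ioi 0) (hne : U.Nonempty) (h : ∀ x ∈ U, x ^ a = P.eval x) : ∃ k : ℕ, a = k := by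
  obtain ⟨x, hx⟩ := hne
  set k := P.natDegree + 1
  have hderiv : deriv^[k] (fun x : ℝ => x ^ a) x = 0 := by
    have hgerm : (fun x : ℝ => x ^ a) =ᶠ[𝓝 x] fun x => P.eval x :=
      eventually_of_mem (hU.mem_nhds hx) h
    rw [← iteratedDeriv_eq_iterate, hgerm.iteratedDeriv_eq k, iteratedDeriv_eq_iterate,
      iterate_deriv_polynomial_eval, Polynomial.iterate_derivative_eq_zero (Nat.lt_succ_self _)]
    exact Polynomial.eval_zero
  rw [Real.iter_deriv_rpow_const, mul_eq_zero,
    or_iff_left (Real.rpow_pos_of_pos (hU₀ hx) _).ne', descPochhammer_eval_eq_prod_range,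
    Finset.prod_eq_zero_iff] at hderiv
  obtain ⟨i, -, hi⟩ := hderiv
  exact ⟨i, sub_eq_zero.1 hi⟩

lemma IsDiphase.exists_nat_eq_sub (hz : IsDiphase d D g κ z) (hg : 0 < g)
    (hD₁ : (d : ℝ) - 1 < D) (hD₂ : D < d) (hq : q ∈ Ioo 0 1) {S : ℝ → ℝ}
    (hS : ∀ x, 0 < x → S x - S (x / q) = z x) {M : ℝ} (hM₀ : M ≠ 0)
    (hM : Tendsto S (𝓝[>] 0) (𝓝 M)) (h₀ : Tendsto S atTop (𝓝 0)) : ∃ k : ℕ, (d : ℝ) - D = k := by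
  set a : ℕ → ℝ := fun m => κ m / (1 - q ^ (-(D - m)))
  refine exists_nat_eq_of_rpow_eq_polynomial (U := Ioo g (g / q))
    (P := ∑ m ∈ Finset.range (d + 1), Polynomial.C (-a m / M) * Polynomial.X ^ (d - m))
    isOpen_Ioo (fun x hx => hg.trans hx.1)
    (nonempty_Ioo.2 ((lt_div_iff₀ hq.1).2 (mul_lt_of_lt_one_right hg hq.2))) fun x hx => ?_
  have hx₀ : 0 < x := hg.trans hx.1
  have hterm : ∀ m, κ m * rpowPrimitive q (D - m) x = a m * x ^ (D - m) := fun m => by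
    rw [rpowPrimitive, mul_div_assoc', div_mul_eq_mul_div]
  have hoverlap : M + ∑ m ∈ Finset.range (d + 1), a m * x ^ (D - m) = 0 := by
    have heq := (hz.eq_of_sub_eq_of_lt hD₁ hq hS hM ⟨hx₀, hx.2⟩).symm.trans
      (hz.eq_of_sub_eq_of_ge hg hD₂ hq hS h₀ hx.1.le)
    simp only [hterm, neg_mul] at heq
    rw [Finset.sum_range_succ, ← add_assoc, heq, neg_add_cancel]
  have hpow : ∀ m ∈ Finset.range (d + 1), x ^ (D - m) * x ^ ((d : ℝ) - D) = x ^ (d - m) :=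
    fun m hm => by
      rw [← Real.rpow_add hx₀, sub_add_sub_cancel', ← Nat.cast_sub (Finset.mem_range_succ_iff.1 hm),
        Real.rpow_natCast]
  calc x ^ ((d : ℝ) - D)
      = -(∑ m ∈ Finset.range (d + 1), a m * x ^ (D - m)) / M * x ^ ((d : ℝ) - D) := by
        rw [← eq_neg_of_add_eq_zero_left hoverlap, div_self hM₀, one_mul]
    _ = ∑ m ∈ Finset.range (d + 1), -a m / M * x ^ (d - m) := by
        rw [neg_div, neg_mul, div_mul_eq_mul_div, Finset.sum_mul, Finset.sum_div,
          ← Finset.sum_neg_distrib]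
        refine Finset.sum_congr rfl fun m hm => ?_
        rw [mul_assoc, hpow m hm]
        ring
    _ = _ := by simp only [Polynomial.eval_finsetSum, Polynomial.eval_mul, Polynomial.eval_C,
        Polynomial.eval_pow, Polynomial.eval_X]

/-- For a limit `M ≠ 0` the function `latticeSum p n q f` would equal a nonzero constant plus powers
`x ^ (D - m)`, `m < d`, on `(0, g / q)` and a multiple of `x ^ (D - d)` on `[g, ∞)`; on the overlap
this makes `x ^ (d - D)` a polynomial, although `0 < d - D < 1`. -/
theorem RenewalEq.eq_zero_of_tendsto_of_isDiphase (h : RenewalEq p (fun j => q ^ n j) f z)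
    (hz : IsDiphase d D g κ z) (hp₀ : ∀ j, 0 ≤ p j) (hp : ∑ j, p j = 1) (hn : ∀ j, 0 < n j)
    (hq : q ∈ Ioo 0 1) (hg : 0 < g) (hD₁ : (d : ℝ) - 1 < D) (hD₂ : D < d)
    (hf : Tendsto f atTop (𝓝 0)) {M : ℝ} (hM : Tendsto f (𝓝[>] 0) (𝓝 M)) : M = 0 := by
  by_contra hM₀
  have hmean : 1 ≤ ∑ j, p j * n j := hp ▸ Finset.sum_le_sum fun j _ =>
    le_mul_of_one_le_right (hp₀ j) (Nat.one_le_cast.2 (hn j))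
  have hdiv₀ : Tendsto (· / q) (𝓝[>] 0) (𝓝[>] 0) := by
    have hcont : Tendsto (· / q) (𝓝[>] 0) (𝓝 (0 / q)) :=
      (continuous_id.div_const q).continuousAt.mono_left nhdsWithin_le_nhds
    rw [zero_div] at hcont
    exact tendsto_nhdsWithin_iff.2
      ⟨hcont, eventually_mem_nhdsWithin.mono fun x hx => div_pos hx hq.1⟩
  have hlim₀ := tendsto_latticeSum (p := p) (n := n) hM hdiv₀
  have hlim := tendsto_latticeSum (p := p) (n := n) hf (tendsto_id.atTop_div_const hq.1)
  rw [mul_zero] at hlim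
  obtain ⟨k, hk⟩ := hz.exists_nat_eq_sub hg hD₁ hD₂ hq (fun x hx => h.latticeSum_sub hp hx)
    (mul_ne_zero (one_pos.trans_le hmean).ne' hM₀) hlim₀ hlim
  have hk₀ : (0 : ℝ) < k := by linarith
  have hk₁ : (k : ℝ) < 1 := by linarith
  norm_cast at hk₀ hk₁
  omega

end RenewalEquations

section SelfSimilarTilings

open Set Topology Metric Module Pointwise

section Similitudes

/-! ### Similitudes -/

/-- Similitudes of ratio `c`; for `c = 0` these are the constant maps. -/
def IsSimilitude {X : Type*} [PseudoMetricSpace X] (c : ℝ) (φ : X → X) : Prop :=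
  ∀ x y, dist (φ x) (φ y) = c * dist x y

variable {E : Type*} [NormedAddCommGroup E] [NormedSpace ℝ E]

lemma IsSimilitude.isometry_inv_smul {c : ℝ} {φ : E → E} (hφ : IsSimilitude c φ) (hc : 0 < c) :
    Isometry fun x => c⁻¹ • φ x :=
  Isometry.of_dist_eq fun x y => by
    rw [dist_smul₀, hφ x y, Real.norm_of_nonneg (inv_nonneg.2 hc.le), inv_mul_cancel_left₀ hc.ne']

lemma addHaar_image_isometry [FiniteDimensional ℝ E] [MeasurableSpace E] [BorelSpace E]
    (μ : Measure E) [μ.IsAddHaarMeasure] {ψ : E → E} (hψ : Isometry ψ) (s : Set E) :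
    μ (ψ '' s) = μ s := by
  rw [Measure.isAddLeftInvariant_eq_smul μ (Measure.hausdorffMeasure (finrank ℝ E)),
    Measure.smul_apply, Measure.smul_apply, hψ.hausdorffMeasure_image (Or.inl (Nat.cast_nonneg _))]

/-- The image of a ball has full measure in the ball of the same radius, and is closed. -/
lemma surjective_of_isometry [FiniteDimensional ℝ E] {ψ : E → E} (hψ : Isometry ψ) :
    Function.Surjective ψ := by
  borelize E
  intro y
  set R := dist y (ψ 0) + 1
  have hsub : ψ '' closedBall 0 R ⊆ closedBall (ψ 0) R := by
    rintro - ⟨x, hx, rfl⟩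
    exact (hψ.dist_eq x 0).trans_le hx
  have hcompact : IsCompact (ψ '' closedBall 0 R) :=
    (isCompact_closedBall 0 R).image hψ.continuous
  have hnull : Measure.addHaar (closedBall (ψ 0) R \ ψ '' closedBall 0 R) = 0 := by
    rw [measure_sdiff hsub hcompact.measurableSet.nullMeasurableSet hcompact.measure_ne_top,
      addHaar_image_isometry _ hψ, Measure.addHaar_closedBall_center, tsub_self]
  have hempty : ball (ψ 0) R \ ψ '' closedBall 0 R = ∅ :=
    ((isOpen_ball.sdiff hcompact.isClosed).measure_eq_zero_iff Measure.addHaar).1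
      (measure_mono_null (sdiff_subset_sdiff_left ball_subset_closedBall) hnull)
  exact image_subset_range _ _ (sdiff_eq_empty.1 hempty (lt_add_one (dist y (ψ 0))))

namespace IsSimilitude

variable {c : ℝ} {φ : E → E}

lemma exists_homeomorph [FiniteDimensional ℝ E] (hφ : IsSimilitude c φ) (hc : 0 < c) :
    ∃ e : E ≃ₜ E, ⇑e = φ := by
  have hψ := hφ.isometry_inv_smul hc
  refine ⟨(IsometryEquiv.mk (Equiv.ofBijective _ ⟨hψ.injective, surjective_of_isometry hψ⟩)
    hψ).toHomeomorph.trans (Homeomorph.smulOfNeZero c hc.ne'), funext fun x => ?_⟩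
  exact smul_inv_smul₀ hc.ne' (φ x)

variable [FiniteDimensional ℝ E] [MeasurableSpace E] [BorelSpace E] (μ : Measure E)
  [μ.IsAddHaarMeasure]

lemma addHaar_image (hφ : IsSimilitude c φ) (hc : 0 < c) (s : Set E) :
    μ (φ '' s) = ENNReal.ofReal (c ^ finrank ℝ E) * μ s := by
  have himage : φ '' s = c • ((fun x => c⁻¹ • φ x) '' s) := by
    simp only [← image_smul, image_image, smul_inv_smul₀ hc.ne']
  rw [himage, Measure.addHaar_smul_of_nonneg μ hc.le,
    addHaar_image_isometry μ (hφ.isometry_inv_smul hc)]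

lemma measureReal_image (hφ : IsSimilitude c φ) (hc : 0 < c) (s : Set E) :
    μ.real (φ '' s) = c ^ finrank ℝ E * μ.real s := by
  rw [measureReal_def, hφ.addHaar_image μ hc, ENNReal.toReal_mul,
    ENNReal.toReal_ofReal (by positivity), measureReal_def]

end IsSimilitude

/-! ### Outer neighborhoods of convex bodies -/

lemma cthickening_subset_image_homothety {C : Set E} (hC : Convex ℝ C) (hC' : IsCompact C) {x₀ : E}
    {ρ : ℝ} (hρ : 0 < ρ) (hball : closedBall x₀ ρ ⊆ C) {ε : ℝ} (hε : 0 < ε) :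
    cthickening ε C ⊆ AffineMap.homothety x₀ (1 + ε / ρ) '' C := by
  rw [hC'.cthickening_eq_biUnion_closedBall hε.le]
  refine iUnion₂_subset fun x hx y hy => ?_
  have hvec : x₀ + (ρ / ε) • (y - x) ∈ C := hball <| by
    rw [mem_closedBall, dist_self_add_left, norm_smul, Real.norm_of_nonneg (by positivity),
      div_mul_eq_mul_div, div_le_iff₀ hε]
    gcongr
    rwa [← dist_eq_norm]
  refine ⟨(1 + ε / ρ)⁻¹ • x + ((1 + ε / ρ)⁻¹ * (ε / ρ)) • (x₀ + (ρ / ε) • (y - x)),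
    hC hx hvec (by positivity) (by positivity) (by field_simp), ?_⟩
  rw [AffineMap.homothety_apply, vsub_eq_sub, vadd_eq_add]
  match_scalars <;> field_simp <;> ring

lemma one_add_mul_pow_le {a ε : ℝ} (ha : 0 ≤ a) (hε : ε ∈ Icc 0 1) (n : ℕ) :
    (1 + ε * a) ^ n ≤ 1 + ε * ((1 + a) ^ n - 1) := by
  have hconv := (convexOn_pow n).2 (x := (1 : ℝ)) (y := 1 + a) (mem_Ici.2 zero_le_one)
    (mem_Ici.2 (by positivity)) (sub_nonneg.2 hε.2) hε.1 (sub_add_cancel 1 ε)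
  simp only [smul_eq_mul, one_pow] at hconv
  calc (1 + ε * a) ^ n = ((1 - ε) * 1 + ε * (1 + a)) ^ n := by ring
    _ ≤ _ := hconv
    _ = _ := by ring

variable [FiniteDimensional ℝ E] [MeasurableSpace E] [BorelSpace E] (μ : Measure E)
  [μ.IsAddHaarMeasure]

lemma exists_measureReal_cthickening_le {C : Set E} (hC : Convex ℝ C) (hC' : IsCompact C)
    (hne : (interior C).Nonempty) :
    ∃ c, ∀ ε ∈ Ioc (0 : ℝ) 1, μ.real (cthickening ε C) ≤ μ.real C + c * ε := by
  obtain ⟨x₀, hx₀⟩ := hne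
  obtain ⟨ρ, hρ, hball⟩ := nhds_basis_closedBall.mem_iff.1 (mem_interior_iff_mem_nhds.1 hx₀)
  refine ⟨((1 + ρ⁻¹) ^ finrank ℝ E - 1) * μ.real C, fun ε hε => ?_⟩
  have hdil : 0 < 1 + ε * ρ⁻¹ := add_pos one_pos (mul_pos hε.1 (inv_pos.2 hρ))
  have himage : μ (AffineMap.homothety x₀ (1 + ε / ρ) '' C) ≠ ⊤ :=
    (hC'.image (AffineMap.homothety_continuous x₀ _)).measure_ne_top
  calc μ.real (cthickening ε C)
      ≤ μ.real (AffineMap.homothety x₀ (1 + ε / ρ) '' C) :=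
        measureReal_mono (cthickening_subset_image_homothety hC hC' hρ hball hε.1) himage
    _ = (1 + ε * ρ⁻¹) ^ finrank ℝ E * μ.real C := by
        rw [measureReal_def, Measure.addHaar_image_homothety, ENNReal.toReal_mul, div_eq_mul_inv,
          abs_of_pos (by positivity), ENNReal.toReal_ofReal (by positivity), measureReal_def]
    _ ≤ (1 + ε * ((1 + ρ⁻¹) ^ finrank ℝ E - 1)) * μ.real C := by
        gcongr
        exact one_add_mul_pow_le (inv_nonneg.2 hρ.le) (Ioc_subset_Icc_self hε) _
    _ = _ := by ring

end Similitudes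

/-! ### Self-similar tilings -/

/-- `F` is the attractor of the similitudes `φ j` of ratios `r j`, and the images of its convex hull
`C` tile `F` in the following sense: `C` has nonempty interior, and the Tileset, Nontriviality and
Pearse–Winter Conditions hold. -/
structure IsSelfSimilarTiling {ι E : Type*} [NormedAddCommGroup E] [NormedSpace ℝ E]
    (φ : ι → E → E) (r : ι → ℝ) (F C : Set E) : Prop where
  ratio_mem : ∀ j, r j ∈ Ioo 0 1
  similitude : ∀ j, IsSimilitude (r j) (φ j)
  isCompact_attractor : IsCompact F
  attractor_eq : F = ⋃ j, φ j '' F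
  hull_eq : C = convexHull ℝ F
  interior_nonempty : (interior C).Nonempty
  image_interior_subset : ∀ j, φ j '' interior C ⊆ interior C
  disjoint_image_interior : ∀ j k, j ≠ k → Disjoint (φ j '' interior C) (φ k '' interior C)
  nontriviality : ¬ interior C ⊆ ⋃ j, φ j '' C
  frontier_subset : frontier C ⊆ F

/-- The set `T₀`, whose connected components are the generators of the tiling of `C` by the iterates
of the maps `φ j`. -/
def tilingGenerator {ι E : Type*} (φ : ι → E → E) (C : Set E) : Set E :=
  C \ ⋃ j, φ j '' C

/-- The inner `ε`-neighborhood of `G`; taking points of `closure G` rather than of `G` includes the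
boundary. -/
def innerCthickening {X : Type*} [PseudoMetricSpace X] (ε : ℝ) (G : Set X) : Set X :=
  {x ∈ closure G | infDist x Gᶜ ≤ ε}

namespace IsSelfSimilarTiling

variable {ι E : Type*} [NormedAddCommGroup E] [NormedSpace ℝ E] {r : ι → ℝ} {φ : ι → E → E}
  {F C : Set E} (h : IsSelfSimilarTiling φ r F C)
include h

lemma convex : Convex ℝ C := h.hull_eq ▸ convex_convexHull ℝ F

lemma attractor_subset : F ⊆ C := h.hull_eq ▸ subset_convexHull ℝ F

lemma isClosed : IsClosed C := isClosed_of_closure_subset <| by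
  rw [closure_eq_self_union_frontier]
  exact union_subset Subset.rfl (h.frontier_subset.trans h.attractor_subset)

lemma isCompact [ProperSpace E] : IsCompact C := by
  refine isCompact_of_isClosed_isBounded h.isClosed ?_
  rw [h.hull_eq, isBounded_convexHull]
  exact h.isCompact_attractor.isBounded

lemma attractor_nonempty : F.Nonempty := by
  rw [← convexHull_nonempty_iff (𝕜 := ℝ), ← h.hull_eq]
  exact h.interior_nonempty.mono interior_subset

lemma closure_interior : closure (interior C) = C := by
  rw [h.convex.closure_interior_eq_closure_of_nonempty_interior h.interior_nonempty,
    h.isClosed.closure_eq]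

lemma image_attractor_subset (j : ι) : φ j '' F ⊆ F :=
  (subset_iUnion (fun j => φ j '' F) j).trans h.attractor_eq.ge

lemma continuous (j : ι) : Continuous (φ j) :=
  (LipschitzWith.of_dist_le' fun x y => (h.similitude j x y).le).continuous

lemma image_subset_closure (j : ι) : φ j '' C ⊆ closure (φ j '' interior C) := by
  conv_lhs => rw [← h.closure_interior]
  exact image_closure_subset_closure_image (h.continuous j)

lemma image_subset (j : ι) : φ j '' C ⊆ C :=
  (h.image_subset_closure j).trans <|
    closure_minimal ((h.image_interior_subset j).trans interior_subset) h.isClosed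

lemma injective (j : ι) : Function.Injective (φ j) :=
  ((h.similitude j).isometry_inv_smul (h.ratio_mem j).1).injective.of_comp (f := ((r j)⁻¹ • ·))

lemma disjoint_generator : Disjoint (tilingGenerator φ C) F :=
  disjoint_sdiff_left.mono_right
    (h.attractor_eq.le.trans (iUnion_mono fun _ => image_mono h.attractor_subset))

variable [FiniteDimensional ℝ E]

lemma isOpen_image_interior (j : ι) : IsOpen (φ j '' interior C) := by
  obtain ⟨e, he⟩ := (h.similitude j).exists_homeomorph (h.ratio_mem j).1
  exact he ▸ e.isOpenMap _ isOpen_interior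

lemma disjoint_image_interior_image {j k : ι} (hjk : j ≠ k) :
    Disjoint (φ j '' interior C) (φ k '' C) :=
  ((h.disjoint_image_interior j k hjk).closure_right (h.isOpen_image_interior j)).mono_right
    (h.image_subset_closure k)

lemma image_inter_image_subset {j k : ι} (hjk : j ≠ k) :
    φ j '' C ∩ φ k '' C ⊆ φ j '' frontier C := by
  rintro - ⟨⟨y, hy, rfl⟩, hk⟩
  refine mem_image_of_mem _ (h.isClosed.frontier_eq ▸ ⟨hy, fun hint => ?_⟩)
  exact disjoint_left.1 (h.disjoint_image_interior_image hjk) (mem_image_of_mem _ hint) hk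

lemma attractor_inter_image (j : ι) : F ∩ φ j '' C = φ j '' F := by
  refine Subset.antisymm ?_
    (subset_inter (h.image_attractor_subset j) (image_mono h.attractor_subset))
  rintro x ⟨hxF, hxC⟩
  rw [h.attractor_eq, mem_iUnion] at hxF
  obtain ⟨k, hk⟩ := hxF
  rcases eq_or_ne j k with rfl | hjk
  · exact hk
  · exact image_mono h.frontier_subset
      (h.image_inter_image_subset hjk ⟨hxC, image_mono h.attractor_subset hk⟩)

/-- A segment from `φ j y` that leaves `φ j '' C` does so through `φ j '' frontier C ⊆ φ j '' F`. -/
lemma exists_ratio_mul_dist_le {j : ι} {y x : E} (hy : y ∈ C) (hx : x ∈ F) :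
    ∃ x' ∈ F, r j * dist y x' ≤ dist (φ j y) x := by
  by_cases hxj : x ∈ φ j '' C
  · obtain ⟨x', hx', rfl⟩ := (h.attractor_inter_image j).subset ⟨hx, hxj⟩
    exact ⟨x', hx', (h.similitude j y x').ge⟩
  · obtain ⟨w, hw, hdist⟩ := exists_mem_frontier_infDist_compl_eq_dist (mem_image_of_mem (φ j) hy)
      fun huniv => hxj (huniv ▸ mem_univ x)
    obtain ⟨e, he⟩ := (h.similitude j).exists_homeomorph (h.ratio_mem j).1
    rw [← he, ← e.image_frontier, he] at hw
    obtain ⟨x', hx', rfl⟩ := hw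
    refine ⟨x', h.frontier_subset hx', ?_⟩
    rw [← h.similitude j, ← hdist]
    exact infDist_le_dist_of_mem hxj

lemma cthickening_inter_image {ε : ℝ} (hε : 0 ≤ ε) (j : ι) :
    cthickening ε F ∩ φ j '' C = φ j '' (cthickening (ε / r j) F ∩ C) := by
  have hr := (h.ratio_mem j).1
  rw [h.isCompact_attractor.cthickening_eq_biUnion_closedBall hε,
    h.isCompact_attractor.cthickening_eq_biUnion_closedBall (div_nonneg hε hr.le)]
  ext w
  simp only [mem_inter_iff, mem_image, mem_iUnion₂, mem_closedBall, exists_prop]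
  constructor
  · rintro ⟨⟨x, hx, hdist⟩, y, hy, rfl⟩
    obtain ⟨x', hx', hle⟩ := h.exists_ratio_mul_dist_le (j := j) hy hx
    exact ⟨y, ⟨⟨x', hx', (le_div_iff₀' hr).2 (hle.trans hdist)⟩, hy⟩, rfl⟩
  · rintro ⟨y, ⟨⟨x', hx', hdist⟩, hy⟩, rfl⟩
    refine ⟨⟨φ j x', h.image_attractor_subset j (mem_image_of_mem _ hx'), ?_⟩, y, hy, rfl⟩
    rw [h.similitude j]
    exact (le_div_iff₀' hr).1 hdist

lemma closure_generator_subset : closure (tilingGenerator φ C) ⊆ tilingGenerator φ C ∪ F := by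
  intro x hx
  by_cases hxG : x ∈ tilingGenerator φ C
  · exact Or.inl hxG
  refine Or.inr ?_
  have hxC : x ∈ C := closure_minimal sdiff_subset h.isClosed hx
  obtain ⟨j, y, hy, rfl⟩ : ∃ j, x ∈ φ j '' C := by
    simpa only [tilingGenerator, Set.mem_sdiff, hxC, true_and, not_not, mem_iUnion] using hxG
  refine h.image_attractor_subset j (mem_image_of_mem _ (h.frontier_subset ?_))
  refine h.isClosed.frontier_eq ▸ ⟨hy, fun hint => ?_⟩
  have hdisj : Disjoint (tilingGenerator φ C) (φ j '' interior C) :=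
    disjoint_sdiff_left.mono_right
      ((image_mono interior_subset).trans (subset_iUnion (fun j => φ j '' C) j))
  exact disjoint_left.1 (hdisj.closure_left (h.isOpen_image_interior j)) hx
    (mem_image_of_mem _ hint)

lemma infDist_compl_generator (hG : IsOpen (tilingGenerator φ C)) {x : E}
    (hx : x ∈ tilingGenerator φ C) : infDist x (tilingGenerator φ C)ᶜ = infDist x F := by
  refine le_antisymm (infDist_le_infDist_of_subset h.disjoint_generator.subset_compl_left
    h.attractor_nonempty) ?_
  obtain ⟨w, hw, hdist⟩ := exists_mem_frontier_infDist_compl_eq_dist hx fun huniv =>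
    h.attractor_nonempty.ne_empty
      (disjoint_univ.1 (huniv ▸ h.disjoint_generator).symm)
  rw [hG.frontier_eq] at hw
  rw [hdist]
  exact infDist_le_dist_of_mem ((h.closure_generator_subset hw.1).resolve_left hw.2)

section Measure

variable [MeasurableSpace E] [BorelSpace E] (μ : Measure E) [μ.IsAddHaarMeasure]

lemma pairwise_aedisjoint_image : Pairwise (Function.onFun (AEDisjoint μ) fun j => φ j '' C) :=
  fun j k hjk => measure_mono_null (h.image_inter_image_subset hjk) <| by
    rw [(h.similitude j).addHaar_image μ (h.ratio_mem j).1, h.convex.addHaar_frontier μ, mul_zero]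

lemma measurableSet_generator [Finite ι] : MeasurableSet (tilingGenerator φ C) :=
  h.isCompact.measurableSet.diff <| MeasurableSet.iUnion fun j =>
    (h.isCompact.image (h.continuous j)).measurableSet

lemma measureReal_eq_add_sum [Fintype ι] {S : Set E} {X : ι → Set E} (hS : S ⊆ C)
    (hX : ∀ j, IsCompact (X j)) (hXC : ∀ j, X j ⊆ C) (hSX : ∀ j, S ∩ φ j '' C = φ j '' X j) :
    μ.real S = μ.real (S ∩ tilingGenerator φ C) + ∑ j, r j ^ finrank ℝ E * μ.real (X j) := by
  have hcover : S \ tilingGenerator φ C = ⋃ j ∈ Finset.univ, φ j '' X j := by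
    simp only [tilingGenerator, sdiff_sdiff_right, sdiff_eq_empty.2 hS, empty_union,
      inter_iUnion, hSX, Finset.mem_univ, iUnion_true]
  have hcompact : ∀ j, IsCompact (φ j '' X j) := fun j => (hX j).image (h.continuous j)
  rw [← measureReal_inter_add_sdiff h.measurableSet_generator
      (measure_ne_top_of_subset hS h.isCompact.measure_ne_top), hcover,
    measureReal_biUnion_finset₀
      (((h.pairwise_aedisjoint_image μ).mono fun j k hjk =>
        hjk.mono (image_mono (hXC j)) (image_mono (hXC k))).set_pairwise _)
      (fun j _ => (hcompact j).measurableSet.nullMeasurableSet)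
      (fun j _ => (hcompact j).measure_ne_top)]
  simp only [(h.similitude _).measureReal_image μ (h.ratio_mem _).1]

end Measure

lemma sum_ratio_pow_finrank_lt_one [Fintype ι] : ∑ j, r j ^ finrank ℝ E < 1 := by
  borelize E
  let μ : Measure E := Measure.addHaar
  have hsplit := h.measureReal_eq_add_sum μ (X := fun _ => C) Subset.rfl (fun _ => h.isCompact)
    (fun _ => Subset.rfl) fun j => inter_eq_right.2 (h.image_subset j)
  have hopen : IsOpen (interior C \ ⋃ j, φ j '' C) := isOpen_interior.sdiff
    (isClosed_iUnion_of_finite fun j => (h.isCompact.image (h.continuous j)).isClosed)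
  have hpos : 0 < μ.real (C ∩ tilingGenerator φ C) := by
    rw [tilingGenerator, inter_eq_right.2 sdiff_subset]
    refine ENNReal.toReal_pos ((hopen.measure_pos μ (sdiff_nonempty.2 h.nontriviality)).trans_le
      (measure_mono (sdiff_subset_sdiff_left interior_subset))).ne'
      (measure_ne_top_of_subset sdiff_subset h.isCompact.measure_ne_top)
  rw [← Finset.sum_mul] at hsplit
  by_contra! hle
  linarith [le_mul_of_one_le_left (measureReal_nonneg (μ := μ) (s := C)) hle]

lemma lt_finrank [Fintype ι] {D : ℝ} (hD : ∑ j, r j ^ D = 1) : D < finrank ℝ E := by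
  by_contra! hle
  refine h.sum_ratio_pow_finrank_lt_one.not_ge (hD.symm.trans_le ?_)
  gcongr with j
  rw [← Real.rpow_natCast]
  exact Real.rpow_le_rpow_of_exponent_ge (h.ratio_mem j).1 (h.ratio_mem j).2.le hle

section Measure

variable [MeasurableSpace E] [BorelSpace E] (μ : Measure E) [μ.IsAddHaarMeasure]

lemma measureReal_attractor [Finite ι] : μ.real F = 0 := by
  have := Fintype.ofFinite ι
  have hsplit := h.measureReal_eq_add_sum μ (X := fun _ => F) h.attractor_subset
    (fun _ => h.isCompact_attractor) (fun _ => h.attractor_subset) h.attractor_inter_image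
  rw [inter_comm, h.disjoint_generator.inter_eq, measureReal_empty, zero_add,
    ← Finset.sum_mul] at hsplit
  nlinarith [h.sum_ratio_pow_finrank_lt_one, measureReal_nonneg (μ := μ) (s := F)]

lemma renewalEq_measureReal_cthickening [Fintype ι] :
    RenewalEq (fun j => r j ^ finrank ℝ E) r (fun ε => μ.real (cthickening ε F ∩ C))
      (fun ε => μ.real (cthickening ε F ∩ tilingGenerator φ C)) := by
  intro ε hε
  have hsplit := h.measureReal_eq_add_sum μ (S := cthickening ε F ∩ C) inter_subset_right
    (fun j => h.isCompact.inter_left (isClosed_cthickening (δ := ε / r j) (E := F)))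
    (fun j => inter_subset_right) fun j => by
      rw [inter_assoc, inter_eq_right.2 (h.image_subset j), h.cthickening_inter_image hε.le]
  rwa [inter_assoc, tilingGenerator, inter_eq_right.2 sdiff_subset] at hsplit

lemma measureReal_innerCthickening_generator [Finite ι] (hG : IsOpen (tilingGenerator φ C))
    {ε : ℝ} (hε : 0 ≤ ε) : μ.real (innerCthickening ε (tilingGenerator φ C)) =
      μ.real (cthickening ε F ∩ tilingGenerator φ C) := by
  have hmem : ∀ x ∈ tilingGenerator φ C,
      x ∈ innerCthickening ε (tilingGenerator φ C) ↔ x ∈ cthickening ε F := fun x hx => by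
    rw [innerCthickening, mem_ofPred_eq, h.infDist_compl_generator hG hx,
      and_iff_right (subset_closure hx), mem_cthickening_iff, infDist,
      ENNReal.le_ofReal_iff_toReal_le (infEDist_ne_top h.attractor_nonempty) hε]
  have hnull : μ F = 0 := (measureReal_eq_zero_iff h.isCompact_attractor.measure_ne_top).1
    (h.measureReal_attractor μ)
  have hsub : cthickening ε F ∩ tilingGenerator φ C ⊆ innerCthickening ε (tilingGenerator φ C) :=
    fun x hx => (hmem x hx.2).2 hx.1
  refine (measureReal_congr (ae_eq_set.2 ⟨measure_mono_null (fun x hx => ?_) hnull, ?_⟩))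
  · rcases h.closure_generator_subset hx.1.1 with hxG | hxF
    · exact absurd ⟨(hmem x hxG).1 hx.1, hxG⟩ hx.2
    · exact hxF
  · rw [sdiff_eq_empty.2 hsub, measure_empty]

end Measure

end IsSelfSimilarTiling

/-! ### Relative tube functions -/

lemma integrableOn_Ioi_rpow_mul_div {U : ℝ → ℝ} (hU : Measurable U) {B a s : ℝ}
    (hB : ∀ ε, |U ε| ≤ B) (ha : a < 0) (hs : 0 < s) :
    IntegrableOn (fun ε => ε ^ a * U ε / ε) (Ioi s) := by
  refine ((integrableOn_Ioi_rpow_of_lt (show a - 1 < -1 by linarith) hs).const_mul B).mono'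
    ((measurable_id.pow_const a).mul hU |>.div measurable_id).aestronglyMeasurable
    (ae_restrict_of_forall_mem measurableSet_Ioi fun ε hε => ?_)
  have hε₀ : 0 < ε := hs.trans hε
  rw [Real.rpow_sub_one hε₀.ne', norm_div, norm_mul, Real.norm_of_nonneg hε₀.le,
    Real.norm_of_nonneg (Real.rpow_nonneg hε₀.le a), mul_comm, mul_div_assoc]
  gcongr
  exact hB ε

lemma tendsto_rpow_mul_atTop_zero {U : ℝ → ℝ} {B a : ℝ} (hB : ∀ ε, |U ε| ≤ B) (ha : a < 0) :
    Tendsto (fun ε => ε ^ a * U ε) atTop (𝓝 0) := by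
  have hrpow := tendsto_rpow_neg_atTop (neg_pos.2 ha)
  rw [neg_neg] at hrpow
  exact hrpow.zero_mul_isBoundedUnder_le (isBoundedUnder_of ⟨B, hB⟩)

lemma integrableOn_Ioc_rpow_mul_div {W : ℝ → ℝ} (hW : Measurable W) {c a : ℝ}
    (hc : ∀ ε ∈ Ioc 0 1, |W ε| ≤ c * ε) (ha : -1 < a) :
    IntegrableOn (fun ε => ε ^ a * W ε / ε) (Ioc 0 1) := by
  have hrpow := (integrableOn_Ioc_rpow_sub_one (neg_lt_iff_pos_add.1 ha) zero_le_one).const_mul c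
  rw [add_sub_cancel_right] at hrpow
  refine hrpow.mono' ((measurable_id.pow_const a).mul hW |>.div measurable_id).aestronglyMeasurable
    (ae_restrict_of_forall_mem measurableSet_Ioc fun ε hε => ?_)
  have hε₀ : 0 < ε := hε.1
  rw [norm_div, norm_mul, Real.norm_of_nonneg hε₀.le,
    Real.norm_of_nonneg (Real.rpow_nonneg hε₀.le a), div_le_iff₀ hε₀, mul_right_comm, mul_comm]
  gcongr
  exact hc ε hε

lemma tendsto_rpow_mul_nhdsGT_zero {W : ℝ → ℝ} {c a : ℝ} (hc : ∀ ε ∈ Ioc 0 1, |W ε| ≤ c * ε)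
    (ha : -1 < a) : Tendsto (fun ε => ε ^ a * W ε) (𝓝[>] 0) (𝓝 0) := by
  have ha' : 0 < a + 1 := neg_lt_iff_pos_add.1 ha
  have hrpow : Tendsto (fun ε : ℝ => c * ε ^ (a + 1)) (𝓝[>] 0) (𝓝 0) := by
    have hcont := ((Real.continuousAt_rpow_const 0 (a + 1) (Or.inr ha'.le)).tendsto.const_mul c)
    rw [Real.zero_rpow ha'.ne', mul_zero] at hcont
    exact hcont.mono_left nhdsWithin_le_nhds
  refine squeeze_zero_norm' ?_ hrpow
  filter_upwards [Ioc_mem_nhdsGT one_pos] with ε hε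
  rw [norm_mul, Real.norm_of_nonneg (Real.rpow_nonneg hε.1.le a), Real.rpow_add_one hε.1.ne',
    mul_left_comm]
  gcongr
  exacts [Real.rpow_nonneg hε.1.le a, hc ε hε]

lemma measurable_measureReal_cthickening_inter {X : Type*} [PseudoMetricSpace X]
    [MeasurableSpace X] {μ : Measure X} {F S : Set X} (hS : ∀ ε, μ (cthickening ε F ∩ S) ≠ ⊤) :
    Measurable fun ε => μ.real (cthickening ε F ∩ S) :=
  Monotone.measurable fun _ ε' hε =>
    measureReal_mono (inter_subset_inter_left S (cthickening_mono hε F)) (hS ε')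

lemma abs_measureReal_cthickening_inter_le {X : Type*} [PseudoMetricSpace X] [MeasurableSpace X]
    {μ : Measure X} {F S : Set X} (hS : μ S ≠ ⊤) (ε : ℝ) :
    |μ.real (cthickening ε F ∩ S)| ≤ μ.real S := by
  rw [abs_of_nonneg measureReal_nonneg]
  exact measureReal_mono inter_subset_right hS

section RelTube

variable {E : Type*} [NormedAddCommGroup E] [NormedSpace ℝ E] [MeasurableSpace E]

/-- The rescaled volume `ε ^ (D - d) * μ (F_ε ∩ S)` of the part in `S` of the `ε`-neighborhood
of `F`, where `d` is the dimension of the space; `S = univ` gives the function whose limit at `0`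
is the Minkowski content of `F`. -/
noncomputable def relTube (μ : Measure E) (D : ℝ) (F S : Set E) (ε : ℝ) : ℝ :=
  ε ^ (D - finrank ℝ E) * μ.real (cthickening ε F ∩ S)

variable {μ : Measure E} {D : ℝ} {F S : Set E}

lemma integrableOn_Ioi_relTube_div (hD : D < finrank ℝ E) (hS : μ S ≠ ⊤) {s : ℝ} (hs : 0 < s) :
    IntegrableOn (fun ε => relTube μ D F S ε / ε) (Ioi s) :=
  integrableOn_Ioi_rpow_mul_div
    (measurable_measureReal_cthickening_inter fun _ =>
      measure_ne_top_of_subset inter_subset_right hS)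
    (abs_measureReal_cthickening_inter_le hS) (sub_neg.2 hD) hs

lemma tendsto_relTube_atTop (hD : D < finrank ℝ E) (hS : μ S ≠ ⊤) :
    Tendsto (relTube μ D F S) atTop (𝓝 0) :=
  tendsto_rpow_mul_atTop_zero (abs_measureReal_cthickening_inter_le hS) (sub_neg.2 hD)

end RelTube

lemma exists_pow_eq_of_closure_log_eq {ι : Type*} [Nonempty ι] {r : ι → ℝ}
    (hr : ∀ j, r j ∈ Ioo 0 1) {a : ℝ}
    (ha : AddSubgroup.closure (range fun j => Real.log (r j)) = AddSubgroup.closure {a}) :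
    ∃ q ∈ Ioo (0 : ℝ) 1, ∃ n : ι → ℕ, (∀ j, 0 < n j) ∧ ∀ j, r j = q ^ n j := by
  have hmul : ∀ j, ∃ k : ℤ, k • a = Real.log (r j) := fun j =>
    AddSubgroup.mem_closure_singleton.1 (ha ▸ AddSubgroup.subset_closure (mem_range_self j))
  choose k hk using hmul
  have hlog : ∀ j, Real.log (r j) < 0 := fun j => Real.log_neg (hr j).1 (hr j).2
  have hne : ∀ j, k j ≠ 0 ∧ a ≠ 0 := fun j => by
    rw [← smul_ne_zero_iff, hk]
    exact (hlog j).ne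
  refine ⟨Real.exp (-|a|), ⟨Real.exp_pos _, Real.exp_lt_one_iff.2 ?_⟩, fun j => (k j).natAbs,
    fun j => Int.natAbs_pos.2 (hne j).1, fun j => ?_⟩
  · exact neg_neg_of_pos (abs_pos.2 (hne (Classical.arbitrary ι)).2)
  · rw [← Real.exp_nat_mul, mul_neg, Nat.cast_natAbs, Int.cast_abs, ← abs_mul, ← zsmul_eq_mul, hk,
      abs_of_neg (hlog j), neg_neg, Real.exp_log (hr j).1]

namespace IsSelfSimilarTiling

variable {ι E : Type*} [NormedAddCommGroup E] [NormedSpace ℝ E] [FiniteDimensional ℝ E]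
  [MeasurableSpace E] [BorelSpace E] (μ : Measure E) [μ.IsAddHaarMeasure]
  {r : ι → ℝ} {φ : ι → E → E} {F C : Set E} (h : IsSelfSimilarTiling φ r F C) {D : ℝ}
include h

lemma exists_abs_measureReal_cthickening_sub_le :
    ∃ c, ∀ ε ∈ Ioc 0 1,
      |μ.real (cthickening ε F ∩ univ) - μ.real (cthickening ε F ∩ C)| ≤ c * ε := by
  obtain ⟨c, hc⟩ := exists_measureReal_cthickening_le μ h.convex h.isCompact h.interior_nonempty
  refine ⟨c, fun ε hε => ?_⟩
  have hfin : μ (cthickening ε C) ≠ ⊤ := h.isCompact.cthickening.measure_ne_top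
  have hmeas : MeasurableSet C := h.isCompact.measurableSet
  have hsplit := measureReal_inter_add_sdiff (μ := μ) (s := cthickening ε F) hmeas
    h.isCompact_attractor.cthickening.measure_ne_top
  rw [inter_univ, ← hsplit, add_sub_cancel_left, abs_of_nonneg measureReal_nonneg]
  calc μ.real (cthickening ε F \ C)
      ≤ μ.real (cthickening ε C \ C) :=
        measureReal_mono
          (sdiff_subset_sdiff_left (cthickening_subset_of_subset ε h.attractor_subset))
          (measure_ne_top_of_subset sdiff_subset hfin)
    _ = μ.real (cthickening ε C) - μ.real C :=
        measureReal_sdiff (self_subset_cthickening C) hmeas hfin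
    _ ≤ c * ε := by linarith [hc ε hε]

lemma tendsto_relTube_univ_sub (hD : (finrank ℝ E : ℝ) - 1 < D) :
    Tendsto (relTube μ D F univ - relTube μ D F C) (𝓝[>] 0) (𝓝 0) := by
  obtain ⟨c, hc⟩ := h.exists_abs_measureReal_cthickening_sub_le μ
  refine (tendsto_rpow_mul_nhdsGT_zero hc (a := D - finrank ℝ E) (by linarith)).congr fun ε => ?_
  rw [Pi.sub_apply, relTube, relTube, mul_sub]

lemma integrableOn_Ioc_relTube_univ_sub_div (hD : (finrank ℝ E : ℝ) - 1 < D) :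
    IntegrableOn (fun ε => (relTube μ D F univ - relTube μ D F C) ε / ε) (Ioc 0 1) := by
  obtain ⟨c, hc⟩ := h.exists_abs_measureReal_cthickening_sub_le μ
  have hfin : ∀ S ε, μ (cthickening ε F ∩ S) ≠ ⊤ := fun S ε =>
    measure_ne_top_of_subset inter_subset_left h.isCompact_attractor.cthickening.measure_ne_top
  have hint := integrableOn_Ioc_rpow_mul_div (a := D - finrank ℝ E)
    ((measurable_measureReal_cthickening_inter (hfin univ)).sub
      (measurable_measureReal_cthickening_inter (hfin C))) hc (by linarith)
  simpa only [Pi.sub_apply, relTube, mul_sub] using hint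

lemma renewalEq_relTube [Fintype ι] :
    RenewalEq (fun j => r j ^ D) r (relTube μ D F C) (relTube μ D F (tilingGenerator φ C)) := by
  have hweight : ∀ j, r j ^ D = r j ^ finrank ℝ E * r j ^ (D - finrank ℝ E) := fun j => by
    rw [← Real.rpow_natCast, ← Real.rpow_add (h.ratio_mem j).1, add_sub_cancel]
  simp only [hweight]
  exact (h.renewalEq_measureReal_cthickening μ).rpow_mul (fun j => (h.ratio_mem j).1) _

variable {g : ℝ} {κ : ℕ → ℝ}

lemma isDiphase_relTube [Finite ι] (hG : IsOpen (tilingGenerator φ C)) (hg : 0 < g)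
    (hlt : ∀ ε, 0 < ε → ε < g → μ.real (innerCthickening ε (tilingGenerator φ C)) =
      ∑ m ∈ Finset.range (finrank ℝ E), κ m * ε ^ ((finrank ℝ E : ℝ) - m))
    (hge : ∀ ε, g ≤ ε → μ.real (innerCthickening ε (tilingGenerator φ C)) = -κ (finrank ℝ E)) :
    IsDiphase (finrank ℝ E) D g κ (relTube μ D F (tilingGenerator φ C)) :=
  isDiphase_rpow_mul
    (fun ε hε hεg =>
      (h.measureReal_innerCthickening_generator μ hG hε.le).symm.trans (hlt ε hε hεg))
    fun ε hε =>
      (h.measureReal_innerCthickening_generator μ hG (hg.le.trans hε)).symm.trans (hge ε hε)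

variable {μ} [Fintype ι]

theorem eq_zero_of_tendsto_relTube_univ (hD : ∑ j, r j ^ D = 1) (hDd : (finrank ℝ E : ℝ) - 1 < D)
    (hg : 0 < g) (hz : IsDiphase (finrank ℝ E) D g κ (relTube μ D F (tilingGenerator φ C))) {a : ℝ}
    (ha : AddSubgroup.closure (range fun j => Real.log (r j)) = AddSubgroup.closure {a}) {M : ℝ}
    (hM : Tendsto (relTube μ D F univ) (𝓝[>] 0) (𝓝 M)) : M = 0 := by
  obtain ⟨j₀, -⟩ := Finset.nonempty_of_sum_ne_zero (hD.trans_ne one_ne_zero)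
  have : Nonempty ι := ⟨j₀⟩
  obtain ⟨q, hq, n, hn, hrq⟩ := exists_pow_eq_of_closure_log_eq h.ratio_mem ha
  have hrenewal := h.renewalEq_relTube μ (D := D)
  have hlt := h.lt_finrank hD
  have hM' := hM.sub (h.tendsto_relTube_univ_sub μ hDd)
  simp only [Pi.sub_apply, sub_sub_cancel, sub_zero] at hM'
  rw [funext hrq] at hrenewal hD
  exact hrenewal.eq_zero_of_tendsto_of_isDiphase hz
    (fun j => Real.rpow_nonneg (pow_nonneg hq.1.le _) D) hD hn hq hg hDd hlt
    (tendsto_relTube_atTop hlt h.isCompact.measure_ne_top) hM'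

theorem tendsto_logAverage_relTube_univ (hD : ∑ j, r j ^ D = 1)
    (hDd : (finrank ℝ E : ℝ) - 1 < D) (hg : 0 < g)
    (hz : IsDiphase (finrank ℝ E) D g κ (relTube μ D F (tilingGenerator φ C))) :
    Tendsto (logAverage (relTube μ D F univ)) atTop
      (𝓝 ((∑ m ∈ Finset.range (finrank ℝ E + 1), g ^ (D - m) / (D - m) * κ m) /
        ∑ j, r j ^ D * Real.log (r j)⁻¹)) := by
  have hlt := h.lt_finrank hD
  have hC : μ C ≠ ⊤ := h.isCompact.measure_ne_top
  have hinner := (h.renewalEq_relTube μ (D := D)).tendsto_logAverage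
    (fun j => Real.rpow_nonneg (h.ratio_mem j).1.le D) hD h.ratio_mem
    (fun s hs => integrableOn_Ioi_relTube_div hlt hC hs) (hz.integrableOn_Ioi hg hDd hlt)
  rw [hz.integral_Ioi hg hDd hlt] at hinner
  have houter := h.integrableOn_Ioc_relTube_univ_sub_div μ hDd
  have hsum := hinner.add (tendsto_logAverage_zero houter)
  rw [add_zero] at hsum
  refine hsum.congr' ?_
  filter_upwards [eventually_gt_atTop 0] with T hT
  have hT' : 0 < 1 / T := one_div_pos.2 hT
  rw [← logAverage_add ((integrableOn_Ioi_relTube_div hlt hC hT').mono_set Ioc_subset_Ioi_self)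
    (houter.mono_set (Ioc_subset_Ioc_left hT'.le)), add_sub_cancel]

end IsSelfSimilarTiling

theorem stmt_1_general {ι E : Type*} [Fintype ι] [NormedAddCommGroup E] [NormedSpace ℝ E]
    [FiniteDimensional ℝ E] [MeasurableSpace E] [BorelSpace E] (μ : Measure E)
    [μ.IsAddHaarMeasure] {d : ℕ} (hd : finrank ℝ E = d) {φ : ι → E → E} {r : ι → ℝ} {F C : Set E}
    (h : IsSelfSimilarTiling φ r F C) {D : ℝ} (hD : ∑ j, r j ^ D = 1) (hDd : (d : ℝ) - 1 < D)
    (hG : IsOpen (tilingGenerator φ C)) {g : ℝ} (hg : 0 < g) {κ : ℕ → ℝ}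
    (hSt₁ : ∀ ε, 0 < ε → ε < g → μ.real (innerCthickening ε (tilingGenerator φ C)) =
      ∑ m ∈ Finset.range d, κ m * ε ^ ((d : ℝ) - m))
    (hSt₂ : ∀ ε, g ≤ ε → μ.real (innerCthickening ε (tilingGenerator φ C)) = -κ d) :
    ((∃ a, AddSubgroup.closure (range fun j => Real.log (r j)) = AddSubgroup.closure {a}) →
      ¬ ∃ M, 0 < M ∧
        Tendsto (fun ε => μ.real (cthickening ε F) * ε ^ (D - d)) (𝓝[>] 0) (𝓝 M)) ∧
    Tendsto (logAverage fun ε => ε ^ (D - d) * μ.real (cthickening ε F)) atTop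
      (𝓝 ((∑ m ∈ Finset.range (d + 1), g ^ (D - m) / (D - m) * κ m) /
        ∑ j, r j ^ D * Real.log (r j)⁻¹)) := by
  subst hd
  have hz := h.isDiphase_relTube μ (D := D) hG hg hSt₁ hSt₂
  have hcontent : relTube μ D F univ =
      fun ε => ε ^ (D - finrank ℝ E) * μ.real (cthickening ε F) := by
    simp only [funext_iff, relTube, inter_univ, implies_true]
  refine ⟨fun ⟨a, ha⟩ ⟨M, hM, hlim⟩ => hM.ne' ?_,
    hcontent ▸ h.tendsto_logAverage_relTube_univ hD hDd hg hz⟩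
  simp only [mul_comm (μ.real _)] at hlim
  exact h.eq_zero_of_tendsto_relTube_univ hD hDd hg hz ha (hcontent ▸ hlim)

end SelfSimilarTilings

/-- A lattice-type self-similar fractal `F ⊆ ℝᵈ` (satisfying the
tileset, nontriviality and Pearse–Winter conditions, with `D > d - 1` and a single
diphase Steiner-like generator `G`) is NOT Minkowski measurable, but its average
Minkowski content exists and equals
`(∑_{m=0}^d (g^{D-m}/(D-m)) κₘ(G)) / (∑_{j=1}^J rⱼ^D log rⱼ⁻¹)`. -/
theorem stmt_1
    (d J : ℕ) (hd : 1 ≤ d) (hJ : 2 ≤ J)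
    (φ : Fin J → EuclideanSpace ℝ (Fin d) → EuclideanSpace ℝ (Fin d))
    (r : Fin J → ℝ) (hr0 : ∀ j, 0 < r j) (hr1 : ∀ j, r j < 1)
    (hsim : ∀ j x y, dist (φ j x) (φ j y) = r j * dist x y)
    (F : Set (EuclideanSpace ℝ (Fin d)))
    (hFcpt : IsCompact F) (hFne : F.Nonempty)
    (hFinv : F = ⋃ j, φ j '' F)
    (D : ℝ) (hD : ∑ j, r j ^ D = 1)
    (C : Set (EuclideanSpace ℝ (Fin d))) (hC : C = convexHull ℝ F)
    (hdim : (interior C).Nonempty)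
    (hTSC₁ : ∀ j, φ j '' interior C ⊆ interior C)
    (hTSC₂ : ∀ j k, j ≠ k → Disjoint (φ j '' interior C) (φ k '' interior C))
    (hNTC : ¬ interior C ⊆ ⋃ j, φ j '' C)
    (hPWC : frontier C ⊆ F)
    (hDd : (d : ℝ) - 1 < D)
    (G : Set (EuclideanSpace ℝ (Fin d)))
    (hG : G = C \ ⋃ j, φ j '' C)
    (hGopen : IsOpen G) (hGbdd : Bornology.IsBounded G) (hGconn : IsConnected G)
    (g : ℝ) (hg : 0 < g)
    (hginr : IsLUB {ρ : ℝ | ∃ x, Metric.ball x ρ ⊆ G} g)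
    (κ : ℕ → ℝ)
    (hSt₁ : ∀ ε : ℝ, 0 < ε → ε < g →
      (volume (innerNbhd G ε)).toReal = ∑ m ∈ Finset.range d, κ m * ε ^ ((d : ℝ) - m))
    (hSt₂ : ∀ ε : ℝ, g ≤ ε → (volume (innerNbhd G ε)).toReal = -κ d)
    (hGvol : (volume G).toReal = -κ d)
    -- lattice type: the subgroup ∑ⱼ (log rⱼ)ℤ of ℝ is discrete, i.e. cyclic
    (hlat : ∃ a : ℝ, AddSubgroup.closure (Set.range fun j => Real.log (r j)) =
        AddSubgroup.closure {a}) :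
    -- F is not Minkowski measurable
    (¬ ∃ M : ℝ, 0 < M ∧
      Tendsto (fun ε : ℝ => (volume (Metric.cthickening ε F)).toReal * ε ^ (D - (d : ℝ)))
        (nhdsWithin 0 (Set.Ioi 0)) (nhds M)) ∧
    -- but the average Minkowski content exists and equals the stated value
    Tendsto (fun T : ℝ => (1 / Real.log T) *
        ∫ ε in Set.Ioc (1 / T) 1,
          ε ^ (D - (d : ℝ)) * (volume (Metric.cthickening ε F)).toReal / ε)
      atTop
      (nhds ((∑ m ∈ Finset.range (d + 1), g ^ (D - (m : ℝ)) / (D - (m : ℝ)) * κ m) /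
        (∑ j, r j ^ D * Real.log (r j)⁻¹))) := by
  subst hC hG
  have h : IsSelfSimilarTiling φ r F (convexHull ℝ F) :=
    ⟨fun j => ⟨hr0 j, hr1 j⟩, hsim, hFcpt, hFinv, rfl, hdim, hTSC₁, hTSC₂, hNTC, hPWC⟩
  obtain ⟨hnot, haverage⟩ :=
    stmt_1_general volume finrank_euclideanSpace_fin h hD hDd hGopen hg hSt₁ hSt₂
  exact ⟨hnot hlat, haverage⟩
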